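/- Let ψ satisfy the hypotheses of the decay theorem: differentiable with n vanishing moments and the norms ‖ψ‖_{1,∞}, ‖x^{n+1}ψ‖_{1,∞}, ‖x^n ψ‖₁ finite. Then Hψ also has n vanishing moments: ∫ x^k Hψ(x) dx = 0 for 0 ≤ k < n. -/

import Mathlib

open MeasureTheory Filter Real Set

open scoped Topology

/-!
Multiplication by `x` commutes with the truncated Hilbert transform up to `π⁻¹` times an integral
bounded by `‖f‖₁`, and in the limit `H (x f) = x H f - π⁻¹ ∫ f`. Vanishing moments therefore give
`H (x ^ k ψ) = x ^ k H ψ` for `k ≤ n`, while `x ^ (n + 1) H ψ` differs from `H (x ^ (n + 1) ψ)` by a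
constant. The transforms of `ψ` and `x ^ (n + 1) ψ` are bounded, so `x ^ k H ψ` is integrable for
`k < n`.

It remains to see that an integrable Hilbert transform `H f` has integral zero. Integrate it against
the Lorentzian `1 / (1 + (s x)²)` and move `H` onto the Lorentzian by antisymmetry of the kernel;
every truncated transform of the Lorentzian is at most `4 s |y| / (1 + (s y)²)`, so the pairing with
`f` vanishes as `s → 0`. Exchanging this with the principal value needs truncations of `H f` bounded
uniformly in `ε`. For `f = x ^ k ψ` the commutation rule provides them, multiplying up from `ψ`
where `|x| ≤ 1` and dividing down from `x ^ (n + 1) ψ` where `|x| ≥ 1`.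
-/

variable {E : Type*} [NormedAddCommGroup E] [NormedSpace ℝ E] {f h : ℝ → E} {ε s : ℝ}

lemma pow_le_one_add_pow_of_le {x : ℝ} {j m : ℕ} (hx : 0 ≤ x) (hjm : j ≤ m) :
    x ^ j ≤ 1 + x ^ m := by
  rcases le_total x 1 with hx1 | hx1
  · linarith [pow_le_one₀ (n := j) hx hx1, pow_nonneg hx m]
  · linarith [pow_le_pow_right₀ hx1 hjm]

lemma integrable_pow_smul_of_le {μ : Measure ℝ} {j m : ℕ} (hf : Integrable f μ)
    (hmf : Integrable (fun x ↦ x ^ m • f x) μ) (hjm : j ≤ m) :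
    Integrable (fun x ↦ x ^ j • f x) μ := by
  refine (hf.norm.add hmf.norm).mono' (.smul (by fun_prop) hf.1) (.of_forall fun x ↦ ?_)
  calc ‖x ^ j • f x‖ = |x| ^ j * ‖f x‖ := by rw [norm_smul, norm_pow, norm_eq_abs]
    _ ≤ (1 + |x| ^ m) * ‖f x‖ := by gcongr; exact pow_le_one_add_pow_of_le (abs_nonneg x) hjm
    _ = ‖f x‖ + ‖x ^ m • f x‖ := by rw [norm_smul, norm_pow, norm_eq_abs]; ring

lemma integrable_pow_smul_of_norm_le {k m : ℕ} {A B : ℝ} (hf : AEStronglyMeasurable f)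
    (hA : ∀ x, ‖f x‖ ≤ A) (hB : ∀ x, ‖x ^ m • f x‖ ≤ B) (hkm : k + 2 ≤ m) :
    Integrable (fun x ↦ x ^ k • f x) := by
  have hdecay : Integrable (fun x : ℝ ↦ (1 + ‖x‖) ^ (-((2 : ℕ) : ℝ))) :=
    integrable_one_add_norm (by simp)
  refine (hdecay.const_mul (2 ^ 2 * (A + (A + B)))).mono' (.smul (by fun_prop) hf)
    (.of_forall fun x ↦ ?_)
  rw [norm_smul, norm_pow]
  refine pow_mul_le_of_le_of_pow_mul_le (norm_nonneg x) (norm_nonneg _) (hA x) ?_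
  calc ‖x‖ ^ (k + 2) * ‖f x‖ ≤ (1 + ‖x‖ ^ m) * ‖f x‖ := by
        gcongr; exact pow_le_one_add_pow_of_le (norm_nonneg x) hkm
    _ = ‖f x‖ + ‖x ^ m • f x‖ := by rw [norm_smul, norm_pow]; ring
    _ ≤ A + B := add_le_add (hA x) (hB x)

lemma integral_eq_integral_Ioi_add_comp_neg (hf : Integrable f) :
    ∫ t, f t = ∫ t in Ioi 0, (f t + f (-t)) := by
  rw [integral_add hf.integrableOn hf.comp_neg.integrableOn, integral_comp_neg_Ioi, neg_zero,
    add_comm, intervalIntegral.integral_Iic_add_Ioi hf.integrableOn hf.integrableOn]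

/-! ### The truncated Hilbert transform -/

/-- The Hilbert kernel `1 / (π t)` set to zero on the window `|t| ≤ ε`. -/
noncomputable def truncatedHilbertKernel (ε t : ℝ) : ℝ :=
  {t : ℝ | ε < |t|}.indicator (fun t ↦ (π * t)⁻¹) t

/-- The Hilbert transform with the window `|t| ≤ ε` around the singularity removed; the
principal value is its limit as `ε → 0⁺`. -/
noncomputable def truncatedHilbert (ε : ℝ) (f : ℝ → E) (x : ℝ) : E :=
  ∫ t, truncatedHilbertKernel ε t • f (x - t)

/-- `h` is the Hilbert transform of `f`, as a principal value existing at every point. -/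
def IsHilbertTransform (f h : ℝ → E) : Prop :=
  ∀ x, Tendsto (fun ε ↦ truncatedHilbert ε f x) (𝓝[>] 0) (𝓝 (h x))

lemma measurableSet_lt_abs (ε : ℝ) : MeasurableSet {t : ℝ | ε < |t|} :=
  measurableSet_lt measurable_const measurable_id.abs

lemma measurable_truncatedHilbertKernel (ε : ℝ) : Measurable (truncatedHilbertKernel ε) :=
  Measurable.indicator (by fun_prop) (measurableSet_lt_abs ε)

lemma truncatedHilbertKernel_neg (ε t : ℝ) :
    truncatedHilbertKernel ε (-t) = -truncatedHilbertKernel ε t := by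
  simp only [truncatedHilbertKernel, indicator_apply, mem_ofPred_eq, abs_neg, mul_neg, inv_neg]
  split_ifs <;> simp only [neg_zero]

lemma truncatedHilbertKernel_mul_self (hε : 0 < ε) (t : ℝ) :
    truncatedHilbertKernel ε t * t = {t : ℝ | ε < |t|}.indicator (fun _ ↦ π⁻¹) t := by
  by_cases ht : ε < |t|
  · have : t ≠ 0 := abs_pos.1 (hε.trans ht)
    simp only [truncatedHilbertKernel, indicator_of_mem (show t ∈ {t | ε < |t|} from ht)]
    field_simp
  · simp [truncatedHilbertKernel, ht]

lemma abs_truncatedHilbertKernel_le_inv (hε : 0 < ε) (t : ℝ) :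
    |truncatedHilbertKernel ε t| ≤ (π * ε)⁻¹ := by
  by_cases ht : ε < |t|
  · simp only [truncatedHilbertKernel, indicator_of_mem (show t ∈ {t | ε < |t|} from ht), abs_inv,
      abs_mul, abs_of_pos pi_pos]
    gcongr
  · simp only [truncatedHilbertKernel, indicator_of_notMem (show t ∉ {t | ε < |t|} from ht),
      abs_zero]
    positivity

lemma abs_truncatedHilbertKernel_mul_le (hε : 0 < ε) (t : ℝ) :
    |truncatedHilbertKernel ε t| * |t| ≤ π⁻¹ := by
  rw [← abs_mul, truncatedHilbertKernel_mul_self hε]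
  by_cases ht : ε < |t| <;> simp [ht, abs_of_pos, pi_pos, pi_pos.le]

lemma integrable_truncatedHilbertKernel_smul (hε : 0 < ε) (hf : Integrable f) :
    Integrable (fun t ↦ truncatedHilbertKernel ε t • f t) :=
  hf.bdd_smul _ (measurable_truncatedHilbertKernel ε).aestronglyMeasurable
    (.of_forall (abs_truncatedHilbertKernel_le_inv hε))

lemma truncatedHilbert_eq_integral_sub (ε : ℝ) (f : ℝ → E) (x : ℝ) :
    truncatedHilbert ε f x = ∫ u, truncatedHilbertKernel ε (x - u) • f u := by
  rw [truncatedHilbert, ← integral_sub_left_eq_self _ volume x]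
  simp only [sub_sub_cancel]

lemma truncatedHilbert_eq_integral_Ioi (hε : 0 < ε) (hf : Integrable f) (x : ℝ) :
    truncatedHilbert ε f x =
      ∫ t in Ioi 0, truncatedHilbertKernel ε t • (f (x - t) - f (x + t)) := by
  rw [truncatedHilbert, integral_eq_integral_Ioi_add_comp_neg
    (integrable_truncatedHilbertKernel_smul hε (hf.comp_sub_left x))]
  simp only [truncatedHilbertKernel_neg, sub_neg_eq_add, neg_smul, smul_sub, ← sub_eq_add_neg]

lemma integral_Ioi_sub_add_add (hf : Integrable f) (x : ℝ) :
    ∫ t in Ioi 0, (f (x - t) + f (x + t)) = ∫ t, f t := by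
  rw [← integral_sub_left_eq_self f volume x,
    integral_eq_integral_Ioi_add_comp_neg (hf.comp_sub_left x)]
  simp only [sub_neg_eq_add]

lemma norm_truncatedHilbert_le_integral (hε : 0 < ε) (hf : Integrable f) {x : ℝ} {g : ℝ → ℝ}
    (hg : IntegrableOn g (Ioi 0)) (hfg : ∀ t > 0, ‖f (x - t) - f (x + t)‖ ≤ t * g t) :
    ‖truncatedHilbert ε f x‖ ≤ π⁻¹ * ∫ t in Ioi 0, g t := by
  rw [truncatedHilbert_eq_integral_Ioi hε hf, ← integral_const_mul]
  refine norm_integral_le_of_norm_le (hg.const_mul _)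
    ((ae_restrict_iff' measurableSet_Ioi).2 (.of_forall fun t (ht : 0 < t) ↦ ?_))
  have hg0 : 0 ≤ g t := nonneg_of_mul_nonneg_right ((norm_nonneg _).trans (hfg t ht)) ht
  calc ‖truncatedHilbertKernel ε t • (f (x - t) - f (x + t))‖
      ≤ |truncatedHilbertKernel ε t| * (t * g t) := by
        rw [norm_smul, norm_eq_abs]; gcongr; exact hfg t ht
    _ = |truncatedHilbertKernel ε t| * |t| * g t := by rw [abs_of_pos ht, mul_assoc]
    _ ≤ π⁻¹ * g t := by gcongr; exact abs_truncatedHilbertKernel_mul_le hε t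

lemma aestronglyMeasurable_truncatedHilbert (ε : ℝ) (hf : AEStronglyMeasurable f) :
    AEStronglyMeasurable (truncatedHilbert ε f) :=
  ((measurable_truncatedHilbertKernel ε).aestronglyMeasurable.convolution_integrand
    (.lsmul ℝ ℝ) hf).integral_prod_right'

lemma IsHilbertTransform.aestronglyMeasurable (hfh : IsHilbertTransform f h)
    (hf : AEStronglyMeasurable f) : AEStronglyMeasurable h :=
  aestronglyMeasurable_of_tendsto_ae (𝓝[>] 0)
    (fun ε ↦ aestronglyMeasurable_truncatedHilbert ε hf) (.of_forall hfh)

/-! ### Multiplication by the variable -/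

lemma truncatedHilbert_id_smul (hε : 0 < ε) (hf : Integrable f) (x : ℝ) :
    truncatedHilbert ε (fun y ↦ y • f y) x =
      x • truncatedHilbert ε f x - π⁻¹ • ∫ t in {t | ε < |t|}, f (x - t) := by
  have hfx := hf.comp_sub_left x
  have hmain : Integrable fun t ↦ x • truncatedHilbertKernel ε t • f (x - t) :=
    (integrable_truncatedHilbertKernel_smul hε hfx).smul x
  have hrest : Integrable fun t ↦ π⁻¹ • {t : ℝ | ε < |t|}.indicator (fun t ↦ f (x - t)) t :=
    (hfx.indicator (measurableSet_lt_abs ε)).smul π⁻¹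
  rw [truncatedHilbert, truncatedHilbert, ← integral_indicator (measurableSet_lt_abs ε),
    ← integral_smul, ← integral_smul, ← integral_sub hmain hrest]
  congr 1 with t
  have hker : truncatedHilbertKernel ε t * (x - t) =
      x * truncatedHilbertKernel ε t - {t : ℝ | ε < |t|}.indicator (fun _ ↦ π⁻¹) t := by
    rw [← truncatedHilbertKernel_mul_self hε]; ring
  rw [smul_smul, hker, sub_smul, mul_smul, ← indicator_smul_const_apply,
    ← indicator_const_smul_apply]
  rfl

lemma norm_truncatedHilbert_id_smul_sub_le (hε : 0 < ε) (hf : Integrable f) (x : ℝ) :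
    ‖truncatedHilbert ε (fun y ↦ y • f y) x - x • truncatedHilbert ε f x‖ ≤ π⁻¹ * ∫ t, ‖f t‖ := by
  rw [truncatedHilbert_id_smul hε hf, sub_sub_cancel_left, norm_neg, norm_smul, norm_inv,
    norm_of_nonneg pi_pos.le, ← integral_sub_left_eq_self (fun t ↦ ‖f t‖) volume x]
  gcongr
  exact (norm_integral_le_integral_norm _).trans
    (setIntegral_le_integral (hf.comp_sub_left x).norm (.of_forall fun _ ↦ norm_nonneg _))

lemma tendsto_setIntegral_lt_abs (hf : Integrable f) :
    Tendsto (fun ε : ℝ ↦ ∫ t in {t | ε < |t|}, f t) (𝓝[>] 0) (𝓝 (∫ t, f t)) := by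
  simp only [← integral_indicator (measurableSet_lt_abs _)]
  refine tendsto_integral_filter_of_dominated_convergence (fun t ↦ ‖f t‖)
    (.of_forall fun ε ↦ hf.1.indicator (measurableSet_lt_abs ε))
    (.of_forall fun ε ↦ .of_forall fun t ↦ norm_indicator_le_norm_self _ _) hf.norm ?_
  filter_upwards [volume.ae_ne 0] with t ht
  refine tendsto_const_nhds.congr' ?_
  filter_upwards [nhdsWithin_le_nhds (Iio_mem_nhds (abs_pos.2 ht))] with ε hε
  exact (indicator_of_mem (s := {t | ε < |t|}) hε f).symm

lemma IsHilbertTransform.id_smul (hfh : IsHilbertTransform f h) (hf : Integrable f) :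
    IsHilbertTransform (fun x ↦ x • f x) (fun x ↦ x • h x - π⁻¹ • ∫ t, f t) := by
  intro x
  have hlim := tendsto_setIntegral_lt_abs (hf.comp_sub_left x)
  rw [integral_sub_left_eq_self] at hlim
  refine (((hfh x).const_smul x).sub (hlim.const_smul π⁻¹)).congr' ?_
  filter_upwards [self_mem_nhdsWithin] with ε hε
  exact (truncatedHilbert_id_smul hε hf x).symm

lemma IsHilbertTransform.pow_smul {k : ℕ} (hfh : IsHilbertTransform f h)
    (hint : ∀ j < k, Integrable (fun x ↦ x ^ j • f x)) (hmom : ∀ j < k, ∫ x, x ^ j • f x = 0) :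
    IsHilbertTransform (fun x ↦ x ^ k • f x) (fun x ↦ x ^ k • h x) := by
  induction k with
  | zero => simpa using hfh
  | succ k ih =>
    have hk := (ih (fun j hj ↦ hint j (by lia)) (fun j hj ↦ hmom j (by lia))).id_smul
      (hint k k.lt_succ_self)
    simpa only [hmom k k.lt_succ_self, smul_zero, sub_zero, smul_smul, ← pow_succ'] using hk

/-! ### Uniformly bounded truncations -/

/-- The truncations of the Hilbert transform of `f` are bounded on `S`, uniformly in the width of
the removed window. -/
def HasBoundedTruncationsOn (f : ℝ → E) (S : Set ℝ) : Prop :=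
  ∃ C, ∀ ε > 0, ∀ x ∈ S, ‖truncatedHilbert ε f x‖ ≤ C

/-- Uniform Dini continuity: some modulus of continuity `ω` of `f` has `∫₀¹ ω(t) / t dt < ∞`. -/
def DiniContinuous {X Y : Type*} [PseudoMetricSpace X] [PseudoMetricSpace Y] (f : X → Y) : Prop :=
  ∃ ω : ℝ → ℝ, IntegrableOn (fun t ↦ ω t / t) (Ioc 0 1) ∧ ∀ x y, dist (f x) (f y) ≤ ω (dist x y)

lemma diniContinuous_of_lipschitzWith {X Y : Type*} [PseudoMetricSpace X] [PseudoMetricSpace Y]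
    {f : X → Y} {K : NNReal} (hf : LipschitzWith K f) : DiniContinuous f := by
  refine ⟨fun t ↦ K * t, ?_, hf.dist_le_mul⟩
  refine (integrableOn_const (C := (K : ℝ)) (by simp)).congr_fun (fun t ht ↦ ?_) measurableSet_Ioc
  exact (mul_div_cancel_right₀ _ ht.1.ne').symm

lemma DiniContinuous.hasBoundedTruncationsOn (hd : DiniContinuous f) (hf : Integrable f) :
    HasBoundedTruncationsOn f univ := by
  obtain ⟨ω, hω, hfω⟩ := hd
  let near : ℝ → ℝ := (Ioc 0 1).indicator fun t ↦ 2 * (ω t / t)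
  have hnear : Integrable near := (integrable_indicator_iff measurableSet_Ioc).2 (hω.const_mul 2)
  refine ⟨π⁻¹ * ((∫ t in Ioi 0, near t) + ∫ t, ‖f t‖), fun ε hε x _ ↦ ?_⟩
  have hfar : Integrable fun t ↦ ‖f (x - t)‖ + ‖f (x + t)‖ :=
    (hf.comp_sub_left x).norm.add (hf.comp_add_left x).norm
  rw [← integral_Ioi_sub_add_add hf.norm x,
    ← integral_add hnear.integrableOn hfar.integrableOn]
  refine norm_truncatedHilbert_le_integral hε hf (hnear.add hfar).integrableOn fun t ht ↦ ?_
  rcases le_or_gt t 1 with ht1 | ht1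
  · have hosc : ‖f (x - t) - f (x + t)‖ ≤ 2 * ω t := by
      have hleft := hfω (x - t) x
      have hright := hfω x (x + t)
      rw [dist_self_sub_left, norm_of_nonneg ht.le] at hleft
      rw [dist_self_add_right, norm_of_nonneg ht.le] at hright
      rw [← dist_eq_norm]
      linarith [dist_triangle (f (x - t)) (f x) (f (x + t))]
    have hnear_t : near t = 2 * (ω t / t) := indicator_of_mem (show t ∈ Ioc 0 1 from ⟨ht, ht1⟩) _
    calc ‖f (x - t) - f (x + t)‖ ≤ t * near t := by
          rw [hnear_t]; field_simp; exact hosc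
      _ ≤ t * (near t + (‖f (x - t)‖ + ‖f (x + t)‖)) := by
          gcongr; simp only [le_add_iff_nonneg_right]; positivity
  · have hnear_t : near t = 0 := indicator_of_notMem (fun hmem ↦ ht1.not_ge hmem.2) _
    calc ‖f (x - t) - f (x + t)‖ ≤ 1 * (‖f (x - t)‖ + ‖f (x + t)‖) := by
          rw [one_mul]; exact norm_sub_le _ _
      _ ≤ t * (near t + (‖f (x - t)‖ + ‖f (x + t)‖)) := by rw [hnear_t, zero_add]; gcongr

lemma IsHilbertTransform.exists_norm_le (hfh : IsHilbertTransform f h)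
    (hb : HasBoundedTruncationsOn f univ) : ∃ C, ∀ x, ‖h x‖ ≤ C := by
  obtain ⟨C, hC⟩ := hb
  refine ⟨C, fun x ↦ le_of_tendsto (hfh x).norm ?_⟩
  filter_upwards [self_mem_nhdsWithin] with ε hε using hC ε hε x (mem_univ x)

namespace HasBoundedTruncationsOn

variable {S T : Set ℝ}

lemma mono (hT : HasBoundedTruncationsOn f T) (hST : S ⊆ T) : HasBoundedTruncationsOn f S :=
  hT.imp fun _ hC ε hε x hx ↦ hC ε hε x (hST hx)

lemma union (hS : HasBoundedTruncationsOn f S) (hT : HasBoundedTruncationsOn f T) :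
    HasBoundedTruncationsOn f (S ∪ T) := by
  obtain ⟨A, hA⟩ := hS
  obtain ⟨B, hB⟩ := hT
  exact ⟨max A B, fun ε hε x hx ↦ hx.elim (fun hx ↦ (hA ε hε x hx).trans (le_max_left A B))
    fun hx ↦ (hB ε hε x hx).trans (le_max_right A B)⟩

lemma id_smul (hb : HasBoundedTruncationsOn f S) (hf : Integrable f) {R : ℝ}
    (hS : ∀ x ∈ S, |x| ≤ R) : HasBoundedTruncationsOn (fun x ↦ x • f x) S := by
  obtain ⟨C, hC⟩ := hb
  refine ⟨π⁻¹ * (∫ t, ‖f t‖) + R * C, fun ε hε x hx ↦ ?_⟩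
  calc ‖truncatedHilbert ε (fun x ↦ x • f x) x‖
      ≤ ‖truncatedHilbert ε (fun x ↦ x • f x) x - x • truncatedHilbert ε f x‖ +
          ‖x • truncatedHilbert ε f x‖ := norm_le_norm_sub_add _ _
    _ ≤ π⁻¹ * (∫ t, ‖f t‖) + R * C := by
      rw [norm_smul]
      gcongr
      · exact norm_truncatedHilbert_id_smul_sub_le hε hf x
      · exact (abs_nonneg x).trans (hS x hx)
      · exact hS x hx
      · exact hC ε hε x hx

lemma of_id_smul (hb : HasBoundedTruncationsOn (fun x ↦ x • f x) S) (hf : Integrable f) {r : ℝ}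
    (hr : 0 < r) (hS : ∀ x ∈ S, r ≤ |x|) : HasBoundedTruncationsOn f S := by
  obtain ⟨C, hC⟩ := hb
  refine ⟨(C + π⁻¹ * ∫ t, ‖f t‖) / r, fun ε hε x hx ↦ (le_div_iff₀' hr).2 ?_⟩
  calc r * ‖truncatedHilbert ε f x‖ ≤ ‖x • truncatedHilbert ε f x‖ := by
        rw [norm_smul]; gcongr; exact hS x hx
    _ ≤ ‖truncatedHilbert ε (fun x ↦ x • f x) x‖ +
          ‖truncatedHilbert ε (fun x ↦ x • f x) x - x • truncatedHilbert ε f x‖ :=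
        norm_le_norm_add_norm_sub _ _
    _ ≤ C + π⁻¹ * ∫ t, ‖f t‖ :=
        add_le_add (hC ε hε x hx) (norm_truncatedHilbert_id_smul_sub_le hε hf x)

lemma pow_smul {k : ℕ} (hb : HasBoundedTruncationsOn f S)
    (hint : ∀ j < k, Integrable (fun x ↦ x ^ j • f x)) {R : ℝ} (hS : ∀ x ∈ S, |x| ≤ R) :
    HasBoundedTruncationsOn (fun x ↦ x ^ k • f x) S := by
  induction k with
  | zero => simpa using hb
  | succ k ih =>
    simpa only [smul_smul, ← pow_succ'] using
      (ih fun j hj ↦ hint j (by lia)).id_smul (hint k k.lt_succ_self) hS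

lemma of_pow_smul {k m : ℕ} (hb : HasBoundedTruncationsOn (fun x ↦ x ^ m • f x) S)
    (hint : ∀ j < m, Integrable (fun x ↦ x ^ j • f x)) {r : ℝ} (hr : 0 < r)
    (hS : ∀ x ∈ S, r ≤ |x|) (hkm : k ≤ m) : HasBoundedTruncationsOn (fun x ↦ x ^ k • f x) S := by
  induction hkm using Nat.decreasingInduction with
  | self => exact hb
  | of_succ j hj ih =>
    simp only [pow_succ', mul_smul] at ih
    exact ih.of_id_smul (hint j hj) hr hS

lemma pow_smul_of_le {k m : ℕ} (hb : HasBoundedTruncationsOn f univ)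
    (hbm : HasBoundedTruncationsOn (fun x ↦ x ^ m • f x) univ)
    (hint : ∀ j < m, Integrable (fun x ↦ x ^ j • f x)) (hkm : k ≤ m) :
    HasBoundedTruncationsOn (fun x ↦ x ^ k • f x) univ := by
  have hnear : HasBoundedTruncationsOn (fun x ↦ x ^ k • f x) {x | |x| ≤ 1} :=
    (hb.mono (subset_univ _)).pow_smul (fun j hj ↦ hint j (hj.trans_le hkm)) fun _ hx ↦ hx
  have hfar : HasBoundedTruncationsOn (fun x ↦ x ^ k • f x) {x | 1 ≤ |x|} :=
    (hbm.mono (subset_univ _)).of_pow_smul hint one_pos (fun _ hx ↦ hx) hkm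
  exact (hnear.union hfar).mono fun x _ ↦ le_total |x| 1

end HasBoundedTruncationsOn

/-! ### Vanishing of the integral of a Hilbert transform -/

lemma integral_smul_truncatedHilbert [CompleteSpace E] (hε : 0 < ε) {g : ℝ → ℝ}
    (hg : Integrable g) (hf : Integrable f) :
    ∫ x, g x • truncatedHilbert ε f x = -∫ y, truncatedHilbert ε g y • f y := by
  have hprod : Integrable (Function.uncurry fun x y ↦
      truncatedHilbertKernel ε (x - y) • g x • f y) (volume.prod volume) :=
    (hg.smul_prod hf).bdd_smul _
      ((measurable_truncatedHilbertKernel ε).comp measurable_sub).aestronglyMeasurable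
      (.of_forall fun _ ↦ abs_truncatedHilbertKernel_le_inv hε _)
  calc ∫ x, g x • truncatedHilbert ε f x
      = ∫ x, ∫ y, truncatedHilbertKernel ε (x - y) • g x • f y := by
        simp only [truncatedHilbert_eq_integral_sub, ← integral_smul, smul_comm (g _)]
    _ = ∫ y, ∫ x, truncatedHilbertKernel ε (x - y) • g x • f y := integral_integral_swap hprod
    _ = ∫ y, -(truncatedHilbert ε g y • f y) := by
        congr 1 with y
        rw [truncatedHilbert_eq_integral_sub, ← integral_smul_const, ← integral_neg]
        congr 1 with x
        rw [← neg_sub y x, truncatedHilbertKernel_neg, neg_smul, smul_assoc]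
    _ = -∫ y, truncatedHilbert ε g y • f y := integral_neg _

/-- The Lorentzian `1 / (1 + (s x)²)`, an integrable cutoff tending to `1` as `s → 0`. -/
noncomputable def lorentzian (s x : ℝ) : ℝ := (1 + (s * x) ^ 2)⁻¹

lemma lorentzian_pos (s x : ℝ) : 0 < lorentzian s x := by unfold lorentzian; positivity

lemma lorentzian_le_one (s x : ℝ) : lorentzian s x ≤ 1 :=
  inv_le_one_of_one_le₀ (by linarith [sq_nonneg (s * x)])

lemma integrable_lorentzian (hs : 0 < s) : Integrable (lorentzian s) :=
  integrable_inv_one_add_sq.comp_mul_left' hs.ne'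

lemma integral_lorentzian (hs : 0 < s) : ∫ x, lorentzian s x = π / s := by
  simp only [lorentzian]
  rw [Measure.integral_comp_mul_left (fun x ↦ (1 + x ^ 2)⁻¹), integral_univ_inv_one_add_sq,
    abs_of_pos (inv_pos.2 hs), smul_eq_mul, div_eq_inv_mul]

lemma lorentzian_zero_left (x : ℝ) : lorentzian 0 x = 1 := by simp [lorentzian]

lemma continuous_lorentzian : Continuous fun p : ℝ × ℝ ↦ lorentzian p.1 p.2 :=
  Continuous.inv₀ (by fun_prop) fun p ↦ by positivity

lemma continuous_mul_abs_mul_lorentzian :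
    Continuous fun p : ℝ × ℝ ↦ p.1 * |p.2| * lorentzian p.1 p.2 :=
  Continuous.mul (by fun_prop) continuous_lorentzian

lemma abs_mul_abs_mul_lorentzian_le (s x : ℝ) : |s * |x| * lorentzian s x| ≤ 1 := by
  rw [abs_mul, abs_mul, abs_abs, abs_of_pos (lorentzian_pos s x), ← abs_mul, lorentzian,
    ← div_eq_mul_inv, div_le_one (by positivity), ← sq_abs]
  nlinarith [sq_nonneg (|s * x| - 1)]

lemma lorentzian_le_lorentzian {x y : ℝ} (hxy : |x| ≤ |y|) : lorentzian s y ≤ lorentzian s x := by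
  unfold lorentzian
  rw [mul_pow, mul_pow]
  gcongr 1
  gcongr 1
  exact mul_le_mul_of_nonneg_left (sq_le_sq.2 hxy) (sq_nonneg s)

-- The point `y` is the midpoint of `y ± t`, so one of these is at least as far from `0` as `y`.
lemma lorentzian_sub_mul_lorentzian_add_le (s y t : ℝ) :
    lorentzian s (y - t) * lorentzian s (y + t) ≤
      lorentzian s y * (lorentzian s (y - t) + lorentzian s (y + t)) := by
  have hsub := lorentzian_pos s (y - t)
  have hadd := lorentzian_pos s (y + t)
  have hy := lorentzian_pos s y
  have hfarther : |y| ≤ |y - t| ∨ |y| ≤ |y + t| := by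
    by_contra! hlt
    have := abs_add_le (y - t) (y + t)
    rw [show y - t + (y + t) = 2 * y by ring, abs_mul, abs_two] at this
    linarith
  rcases hfarther with hle | hle
  · nlinarith [lorentzian_le_lorentzian (s := s) hle]
  · nlinarith [lorentzian_le_lorentzian (s := s) hle]

lemma lorentzian_sub_sub_lorentzian_add (s y t : ℝ) :
    lorentzian s (y - t) - lorentzian s (y + t) =
      t * (4 * s ^ 2 * y * (lorentzian s (y - t) * lorentzian s (y + t))) := by
  unfold lorentzian
  field_simp
  ring

lemma norm_truncatedHilbert_lorentzian_le (hs : 0 < s) (hε : 0 < ε) (y : ℝ) :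
    ‖truncatedHilbert ε (lorentzian s) y‖ ≤ 4 * (s * |y| * lorentzian s y) := by
  have hint := integrable_lorentzian hs
  let g : ℝ → ℝ := fun t ↦
    4 * s ^ 2 * |y| * lorentzian s y * (lorentzian s (y - t) + lorentzian s (y + t))
  have hg : Integrable g := ((hint.comp_sub_left y).add (hint.comp_add_left y)).const_mul _
  have hdiff : ∀ t > 0, ‖lorentzian s (y - t) - lorentzian s (y + t)‖ ≤ t * g t := by
    intro t ht
    have hsub := lorentzian_pos s (y - t)
    have hadd := lorentzian_pos s (y + t)
    rw [lorentzian_sub_sub_lorentzian_add, norm_eq_abs, abs_mul, abs_mul, abs_mul, abs_of_pos ht,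
      abs_of_pos (by positivity : 0 < 4 * s ^ 2), abs_of_pos (mul_pos hsub hadd)]
    simp only [g]
    rw [mul_assoc (4 * s ^ 2 * |y|)]
    refine mul_le_mul_of_nonneg_left (mul_le_mul_of_nonneg_left ?_ (by positivity)) ht.le
    exact lorentzian_sub_mul_lorentzian_add_le s y t
  calc ‖truncatedHilbert ε (lorentzian s) y‖ ≤ π⁻¹ * ∫ t in Ioi 0, g t :=
        norm_truncatedHilbert_le_integral hε hint hg.integrableOn hdiff
    _ = 4 * (s * |y| * lorentzian s y) := by
        rw [integral_const_mul, integral_Ioi_sub_add_add hint, integral_lorentzian hs]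
        field_simp

lemma norm_integral_lorentzian_smul_le [CompleteSpace E] (hf : Integrable f)
    (hb : HasBoundedTruncationsOn f univ) (hfh : IsHilbertTransform f h) (hs : 0 < s) :
    ‖∫ x, lorentzian s x • h x‖ ≤ ∫ y, 4 * (s * |y| * lorentzian s y * ‖f y‖) := by
  obtain ⟨C, hC⟩ := hb
  have hint := integrable_lorentzian hs
  have hlim : Tendsto (fun ε ↦ ∫ x, lorentzian s x • truncatedHilbert ε f x) (𝓝[>] 0)
      (𝓝 (∫ x, lorentzian s x • h x)) := by
    refine tendsto_integral_filter_of_dominated_convergence (fun x ↦ lorentzian s x * C)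
      (.of_forall fun ε ↦ hint.1.smul (aestronglyMeasurable_truncatedHilbert ε hf.1)) ?_
      (hint.mul_const C) (.of_forall fun x ↦ (hfh x).const_smul _)
    filter_upwards [self_mem_nhdsWithin] with ε hε
    refine .of_forall fun x ↦ ?_
    rw [norm_smul, norm_of_nonneg (lorentzian_pos s x).le]
    exact mul_le_mul_of_nonneg_left (hC ε hε x (mem_univ x)) (lorentzian_pos s x).le
  have hweight : Integrable fun y ↦ s * |y| * lorentzian s y * ‖f y‖ :=
    hf.norm.bdd_mul (continuous_mul_abs_mul_lorentzian.comp (.prodMk_right s)).aestronglyMeasurable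
      (.of_forall (abs_mul_abs_mul_lorentzian_le s))
  refine le_of_tendsto hlim.norm ?_
  filter_upwards [self_mem_nhdsWithin] with ε hε
  rw [integral_smul_truncatedHilbert hε hint hf, norm_neg]
  refine norm_integral_le_of_norm_le (hweight.const_mul 4) (.of_forall fun y ↦ ?_)
  rw [norm_smul, ← mul_assoc]
  gcongr
  exact norm_truncatedHilbert_lorentzian_le hs hε y

lemma tendsto_integral_lorentzian_smul (hf : Integrable f) :
    Tendsto (fun s ↦ ∫ x, lorentzian s x • f x) (𝓝 0) (𝓝 (∫ x, f x)) := by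
  refine tendsto_integral_filter_of_dominated_convergence (fun x ↦ ‖f x‖)
    (.of_forall fun s ↦ ?_) (.of_forall fun s ↦ .of_forall fun x ↦ ?_) hf.norm
    (.of_forall fun x ↦ ?_)
  · exact (continuous_lorentzian.comp (.prodMk_right s)).aestronglyMeasurable.smul hf.1
  · rw [norm_smul, norm_of_nonneg (lorentzian_pos s x).le]
    exact mul_le_of_le_one_left (norm_nonneg _) (lorentzian_le_one s x)
  · have hcont : Continuous fun s ↦ lorentzian s x • f x :=
      (continuous_lorentzian.comp (.prodMk_left x)).smul continuous_const
    simpa [lorentzian_zero_left] using hcont.tendsto 0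

lemma tendsto_integral_mul_abs_mul_lorentzian_smul (hf : Integrable f) :
    Tendsto (fun s ↦ ∫ x, (s * |x| * lorentzian s x) • f x) (𝓝 0) (𝓝 0) := by
  rw [← integral_zero ℝ E]
  refine tendsto_integral_filter_of_dominated_convergence (fun x ↦ ‖f x‖)
    (.of_forall fun s ↦ ?_) (.of_forall fun s ↦ .of_forall fun x ↦ ?_) hf.norm
    (.of_forall fun x ↦ ?_)
  · exact (continuous_mul_abs_mul_lorentzian.comp (.prodMk_right s)).aestronglyMeasurable.smul hf.1
  · rw [norm_smul]
    exact mul_le_of_le_one_left (norm_nonneg _) (abs_mul_abs_mul_lorentzian_le s x)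
  · have hcont : Continuous fun s ↦ (s * |x| * lorentzian s x) • f x :=
      (continuous_mul_abs_mul_lorentzian.comp (.prodMk_left x)).smul continuous_const
    simpa using hcont.tendsto 0

lemma IsHilbertTransform.integral_eq_zero [CompleteSpace E] (hfh : IsHilbertTransform f h)
    (hf : Integrable f) (hb : HasBoundedTruncationsOn f univ) (hh : Integrable h) :
    ∫ x, h x = 0 := by
  have hleft := (tendsto_integral_lorentzian_smul hh).norm.mono_left
    (nhdsWithin_le_nhds (s := Ioi 0))
  have hright : Tendsto (fun s ↦ ∫ y, 4 * (s * |y| * lorentzian s y * ‖f y‖)) (𝓝[>] 0) (𝓝 0) := by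
    simpa [integral_const_mul] using ((tendsto_integral_mul_abs_mul_lorentzian_smul
      hf.norm).const_mul 4).mono_left (nhdsWithin_le_nhds (s := Ioi 0))
  refine norm_le_zero_iff.1 (le_of_tendsto_of_tendsto hleft hright ?_)
  filter_upwards [self_mem_nhdsWithin] with s hs
  exact norm_integral_lorentzian_smul_le hf hb hfh hs

/-! ### Vanishing moments -/

lemma IsHilbertTransform.integrable_pow_smul {k n : ℕ} (hfh : IsHilbertTransform f h)
    (hf : Integrable f) (htop : Integrable (fun x ↦ x ^ (n + 1) • f x))
    (hmom : ∀ j < n, ∫ x, x ^ j • f x = 0) (hb : HasBoundedTruncationsOn f univ)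
    (hbtop : HasBoundedTruncationsOn (fun x ↦ x ^ (n + 1) • f x) univ) (hk : k < n) :
    Integrable (fun x ↦ x ^ k • h x) := by
  have hint (j : ℕ) (hj : j ≤ n + 1) := integrable_pow_smul_of_le hf htop hj
  have htransform := (hfh.pow_smul (fun j hj ↦ hint j (by lia)) hmom).id_smul (hint n (by lia))
  simp only [smul_smul, ← pow_succ'] at htransform
  obtain ⟨A, hA⟩ := hfh.exists_norm_le hb
  obtain ⟨B, hB⟩ := htransform.exists_norm_le hbtop
  refine integrable_pow_smul_of_norm_le (hfh.aestronglyMeasurable hf.1) hA (m := n + 1)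
    (B := ‖π⁻¹ • ∫ t, t ^ n • f t‖ + B) (fun x ↦ ?_) (by lia)
  exact (norm_le_norm_add_norm_sub' _ _).trans (by gcongr; exact hB x)

theorem hilbert_transform_vanishing_moments_general [CompleteSpace E] (ψ Hψ : ℝ → E) (n : ℕ)
    (hψ : DiniContinuous ψ) (hmom : ∀ k < n, ∫ x, x ^ k • ψ x = 0) (hint : Integrable ψ)
    (hgint : Integrable (fun x ↦ x ^ (n + 1) • ψ x))
    (hg : DiniContinuous (fun x ↦ x ^ (n + 1) • ψ x)) (hHψ : IsHilbertTransform ψ Hψ) :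
    ∀ k < n, Integrable (fun x ↦ x ^ k • Hψ x) ∧ ∫ x, x ^ k • Hψ x = 0 := by
  intro k hk
  have hpow (j : ℕ) (hj : j ≤ n + 1) := integrable_pow_smul_of_le hint hgint hj
  have hb := hψ.hasBoundedTruncationsOn hint
  have hbtop := hg.hasBoundedTruncationsOn hgint
  have hHpow : Integrable (fun x ↦ x ^ k • Hψ x) :=
    hHψ.integrable_pow_smul hint hgint hmom hb hbtop hk
  have htransform : IsHilbertTransform (fun x ↦ x ^ k • ψ x) (fun x ↦ x ^ k • Hψ x) :=
    hHψ.pow_smul (fun j hj ↦ hpow j (by lia)) fun j hj ↦ hmom j (hj.trans hk)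
  have hbk : HasBoundedTruncationsOn (fun x ↦ x ^ k • ψ x) univ :=
    hb.pow_smul_of_le hbtop (fun j hj ↦ hpow j hj.le) (by lia)
  exact ⟨hHpow, htransform.integral_eq_zero (hpow k (by lia)) hbk hHpow⟩

lemma truncatedHilbert_eq_inv_pi_mul_integral_div (ε : ℝ) (f : ℝ → ℝ) (x : ℝ) :
    truncatedHilbert ε f x = 1 / π * ∫ t in {t : ℝ | ε < |t|}, f (x - t) / t := by
  rw [truncatedHilbert, ← integral_const_mul, ← integral_indicator (measurableSet_lt_abs ε)]
  congr 1 with t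
  simp only [truncatedHilbertKernel, indicator_apply, smul_eq_mul]
  split_ifs
  · field_simp
  · simp

lemma diniContinuous_of_abs_deriv_le {f : ℝ → ℝ} {M : ℝ} (hf : Differentiable ℝ f)
    (hM : ∀ x, |deriv f x| ≤ M) : DiniContinuous f :=
  diniContinuous_of_lipschitzWith (lipschitzWith_of_nnnorm_deriv_le (C := M.toNNReal) hf
    fun x ↦ NNReal.coe_le_coe.1 ((hM x).trans M.le_coe_toNNReal))

/-- Under the hypotheses of the decay theorem (differentiability,
`n` vanishing moments, finiteness of `‖ψ‖_{1,∞}`, `‖x^{n+1}ψ‖_{1,∞}`, `‖x^n ψ‖₁`),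
the pointwise principal-value Hilbert transform `Hψ` again has `n` vanishing moments:
`x^k Hψ(x)` is integrable and `∫ x^k Hψ(x) dx = 0` for `0 ≤ k < n`. -/
theorem hilbert_transform_vanishing_moments (ψ Hψ : ℝ → ℝ) (n : ℕ)
    (hdiff : Differentiable ℝ ψ)
    (hmom : ∀ k < n, ∫ x, x ^ k * ψ x = 0)
    (hint : Integrable ψ) (M : ℝ) (hM : ∀ x, |deriv ψ x| ≤ M)
    (hgint : Integrable (fun x => x ^ (n + 1) * ψ x)) (M' : ℝ)
    (hM' : ∀ x, |deriv (fun x => x ^ (n + 1) * ψ x) x| ≤ M')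
    (hnint : Integrable (fun x => x ^ n * ψ x))
    (hHψ : ∀ x : ℝ, Tendsto (fun ε : ℝ => (1 / π) * ∫ t in {t : ℝ | ε < |t|}, ψ (x - t) / t)
      (nhdsWithin 0 (Ioi 0)) (nhds (Hψ x))) :
    ∀ k < n, Integrable (fun x => x ^ k * Hψ x) ∧ ∫ x, x ^ k * Hψ x = 0 :=
  hilbert_transform_vanishing_moments_general ψ Hψ n (diniContinuous_of_abs_deriv_le hdiff hM) hmom
    hint hgint (diniContinuous_of_abs_deriv_le (by fun_prop) hM')
    fun x ↦ (hHψ x).congr fun ε ↦ (truncatedHilbert_eq_inv_pi_mul_integral_div ε ψ x).symm
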